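/- Let s, w, t ∈ ℂ with Re s > 3/2, Re w > 1 and Re t > 0. Define B_±(s,w;t) := (1/2)·Σ_{n ≥ 1, n ≡ ±1 (mod 4)} Σ_{k ≥ 1} τ(χ⁽⁴ⁿ⁾, k) · a_t(4n) · ψ₂(n) / (n^{s+1/2}·k^{w}) and, for Dirichlet characters ψ, ψ′, B(s,w;t,ψ,ψ′) := Σ_{n odd ≥ 1} Σ_{k ≥ 1} G((·/n),k) · a_t(n) · ψ(n) · ψ′(k) / (n^{s+1/2}·k^{w}), all these double series converging absolutely. Then B_±(s,w;t) = (ε_± · a_t(2)/(2·4^{w})) · ( B(s,w;t,ψ₂,ψ₀) ± B(s,w;t,ψ₋₂,ψ₀) ) − (ε_± · a_t(2)/(2·2^{w})) · ( B(s,w;t,ψ₁,ψ₁) ± B(s,w;t,ψ₋₁,ψ₁) ), where ε₊ = 1 and ε₋ = i. -/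

import Mathlib

open Complex

noncomputable section

/-- Gauss sum `τ((·/n),k)` of the Jacobi-symbol character mod `n` (`n` odd). -/
def jacobiTau (n k : ℕ) : ℂ :=
  ∑ j ∈ Finset.range n, ((jacobiSym (j : ℤ) n : ℤ) : ℂ) *
    Complex.exp (2 * Real.pi * Complex.I * j * k / n)

/-- Modified Gauss sum `G((·/n),k) = ((1-i)/2 + (-1|n)(1+i)/2) τ((·/n),k)`. -/
def jacobiG (n k : ℕ) : ℂ :=
  ((1 - Complex.I) / 2 + ((jacobiSym (-1 : ℤ) n : ℤ) : ℂ) * (1 + Complex.I) / 2) * jacobiTau n k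

/-- Gauss sum `τ(χ⁽⁴ⁿ⁾,k)` of the Kronecker character `(·/4n)` (`n` odd), whose value at odd `j`
is the Jacobi symbol `(j|n)` and `0` at even `j`. -/
def tau4n (n k : ℕ) : ℂ :=
  ∑ j ∈ Finset.range (4 * n), (if Odd j then ((jacobiSym (j : ℤ) n : ℤ) : ℂ) else 0) *
    Complex.exp (2 * Real.pi * Complex.I * j * k / (4 * n))

/-- `a_t(m) = ∏_{p | m} (1 - p^{-t})^{-1}`. -/
def aF (t : ℂ) (m : ℕ) : ℂ := ∏ p ∈ m.primeFactors, (1 - (p : ℂ) ^ (-t))⁻¹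

/-- The trivial character `ψ₀ = 1`. -/
def psi0 : ℕ → ℂ := fun _ => 1

/-- The principal character mod 4. -/
def psi1 : ℕ → ℂ := fun n => if Odd n then 1 else 0

/-- The non-principal character mod 4 (`χ₄`). -/
def psim1 : ℕ → ℂ := fun n => ((ZMod.χ₄ (n : ZMod 4) : ℤ) : ℂ)

/-- The primitive quadratic character `χ₈` mod 8. -/
def psi2 : ℕ → ℂ := fun n => ((ZMod.χ₈ (n : ZMod 8) : ℤ) : ℂ)

/-- The primitive quadratic character `χ₈'` mod 8. -/
def psim2 : ℕ → ℂ := fun n => ((ZMod.χ₈' (n : ZMod 8) : ℤ) : ℂ)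

/-- The double Dirichlet series `B(s,w;t,ψ,ψ')` with modified Gauss sum coefficients. -/
def Bgen (s w t : ℂ) (ψ ψ' : ℕ → ℂ) : ℂ :=
  ∑' q : ℕ × ℕ, if Odd q.1 ∧ 1 ≤ q.2 then
    jacobiG q.1 q.2 * aF t q.1 * ψ q.1 * ψ' q.2 / ((q.1 : ℂ) ^ (s + 1 / 2) * (q.2 : ℂ) ^ w)
  else 0

/-- The double Dirichlet series `B_±(s,w;t)`, where `r = 1` resp. `r = 3` selects the
summands with `n ≡ ±1 (mod 4)`. -/
def Bpm (r : ℕ) (s w t : ℂ) : ℂ :=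
  (1 / 2) * ∑' q : ℕ × ℕ, if q.1 % 4 = r ∧ 1 ≤ q.2 then
    tau4n q.1 q.2 * aF t (4 * q.1) * psi2 q.1 / ((q.1 : ℂ) ^ (s + 1 / 2) * (q.2 : ℂ) ^ w)
  else 0

/-!
For odd `n` the Chinese remainder theorem and `(4/n) = 1` factor the Gauss sum modulo `4n` as
`τ(χ⁽⁴ⁿ⁾,k) = (i^k + (-i)^k) τ((·/n),k)`. It vanishes for odd `k`; pulling powers of `2` out of
`k` by means of `(2/n) = ψ₂(n)`, it equals `-2 ψ₂(n) τ((·/n),k/2)` for `k ≡ 2 (mod 4)` and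
`2 τ((·/n),k/4)` for `4 ∣ k`, which is where `2^{-w}` and `4^{-w}` come from. For `n ≡ r (mod 4)`
one has `τ((·/n),k) = ε_r G((·/n),k)`, the residue class of an odd `r` is cut out among the odd `n`
by `(1 + ψ₋₁(r) ψ₋₁(n)) / 2`, and `ψ₂ ψ₋₁ = ψ₋₂`, `ψ₂² = ψ₁`. Absolute convergence follows from the
trivial bound `|τ((·/n),k)| ≤ n` together with `a_t(n) = O(n^e)` for every `e > 0`.
-/

open Finset Function

section CompleteResidueSystems

variable {M : Type*} [AddCommMonoid M] {F : ℕ → M}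

theorem sum_comp_eq_sum_range_of_periodic {ι : Type*} {s : Finset ι} {g : ι → ℕ} {N : ℕ}
    (hF : Periodic F N) (hcard : #s = N)
    (hg : ∀ i ∈ s, ∀ j ∈ s, g i ≡ g j [MOD N] → i = j) :
    ∑ i ∈ s, F (g i) = ∑ j ∈ range N, F j := by
  have maps : ∀ i ∈ s, g i % N ∈ range N := fun i hi =>
    mem_range.2 (Nat.mod_lt _ (hcard ▸ card_pos.2 ⟨i, hi⟩))
  have inj : Set.InjOn (fun i => g i % N) s := fun i hi j hj h => hg i hi j hj h
  refine sum_nbij (fun i => g i % N) maps inj ?_ fun i _ => (hF.map_mod_nat _).symm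
  exact surjOn_of_injOn_of_card_le _ maps inj (by rw [card_range, hcard])

theorem sum_range_mul_left_of_coprime {u N : ℕ} (hu : N.Coprime u) (hF : Periodic F N) :
    ∑ j ∈ range N, F (u * j) = ∑ j ∈ range N, F j := by
  refine sum_comp_eq_sum_range_of_periodic hF (card_range N) fun i hi j hj h => ?_
  exact (Nat.ModEq.cancel_left_of_coprime hu h).eq_of_lt_of_lt (mem_range.1 hi) (mem_range.1 hj)

theorem sum_range_mul_of_coprime {m n : ℕ} (hmn : m.Coprime n) (hF : Periodic F (m * n)) :
    ∑ j ∈ range (m * n), F j = ∑ a ∈ range m, ∑ b ∈ range n, F (n * a + m * b) := by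
  rw [← sum_product', eq_comm]
  refine sum_comp_eq_sum_range_of_periodic (g := fun q : ℕ × ℕ => n * q.1 + m * q.2) hF
    (by simp) ?_
  rintro ⟨a, b⟩ hab ⟨a', b'⟩ hab' h
  simp only [mem_product, mem_range] at hab hab'
  have mod_m : n * a ≡ n * a' [MOD m] := by
    simpa [Nat.ModEq] using h.of_dvd (Dvd.intro n rfl)
  have mod_n : m * b ≡ m * b' [MOD n] := by
    simpa [Nat.ModEq] using h.of_dvd (Dvd.intro_left m rfl)
  rw [(mod_m.cancel_left_of_coprime hmn).eq_of_lt_of_lt hab.1 hab'.1,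
    (mod_n.cancel_left_of_coprime hmn.symm).eq_of_lt_of_lt hab.2 hab'.2]

end CompleteResidueSystems

section GaussSums

/-- The Gauss sum `∑_{j < N} χ(j) e(jk/N)`, where `e(x) = exp(2πix)`, of a function `χ` that is
meant to be `N`-periodic. -/
def natGaussSum (χ : ℕ → ℂ) (N k : ℕ) : ℂ :=
  ∑ j ∈ range N, χ j * exp (2 * Real.pi * I * j * k / N)

theorem periodic_exp_two_pi_mul_div (N k : ℕ) :
    Periodic (fun j : ℕ => exp (2 * Real.pi * I * j * k / N)) N := by
  intro j
  rcases eq_or_ne N 0 with rfl | hN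
  · simp
  have hN' : (N : ℂ) ≠ 0 := Nat.cast_ne_zero.2 hN
  have shift : 2 * Real.pi * I * (j + N : ℕ) * k / N
      = 2 * Real.pi * I * j * k / N + k * (2 * Real.pi * I) := by
    push_cast
    field_simp
  simpa only [shift] using exp_periodic.nat_mul k _

theorem norm_natGaussSum_le {χ : ℕ → ℂ} (hχ : ∀ j, ‖χ j‖ ≤ 1) (N k : ℕ) :
    ‖natGaussSum χ N k‖ ≤ N := by
  refine (norm_sum_le_of_le (range N) (n := fun _ => (1 : ℝ)) fun j _ => ?_).trans (by simp)
  have unit : ‖exp (2 * Real.pi * I * j * k / N)‖ = 1 := by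
    rw [← norm_exp_ofReal_mul_I (2 * Real.pi * j * k / N)]
    push_cast
    ring_nf
  simpa only [norm_mul, unit, mul_one] using hχ j

theorem natGaussSum_comp_mul_left {χ : ℕ → ℂ} {N u : ℕ} (hχ : Periodic χ N) (hu : N.Coprime u)
    (k : ℕ) : natGaussSum (fun j => χ (u * j)) N (u * k) = natGaussSum χ N k := by
  refine Eq.trans (sum_congr rfl fun j _ => ?_)
    (sum_range_mul_left_of_coprime hu (hχ.mul (periodic_exp_two_pi_mul_div N k)))
  push_cast
  ring_nf

theorem natGaussSum_mul_of_coprime {χ ψ : ℕ → ℂ} {m n : ℕ} (hχ : Periodic χ m)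
    (hψ : Periodic ψ n) (hmn : m.Coprime n) (hm : m ≠ 0) (hn : n ≠ 0) (k : ℕ) :
    natGaussSum (fun j => χ j * ψ j) (m * n) k =
      natGaussSum (fun j => χ (n * j)) m k * natGaussSum (fun j => ψ (m * j)) n k := by
  have hm' : (m : ℂ) ≠ 0 := Nat.cast_ne_zero.2 hm
  have hn' : (n : ℂ) ≠ 0 := Nat.cast_ne_zero.2 hn
  have hχ' : Periodic χ (m * n) := mul_comm m n ▸ hχ.nat_mul n
  have hψ' : Periodic ψ (m * n) := hψ.nat_mul m
  refine (sum_range_mul_of_coprime hmn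
    ((hχ'.mul hψ').mul (periodic_exp_two_pi_mul_div (m * n) k))).trans ?_
  rw [natGaussSum, natGaussSum, sum_mul_sum]
  refine sum_congr rfl fun a _ => sum_congr rfl fun b _ => ?_
  have eval_χ : χ (n * a + m * b) = χ (n * a) := by
    rw [mul_comm m b]; exact hχ.nat_mul b (n * a)
  have eval_ψ : ψ (n * a + m * b) = ψ (m * b) := by
    rw [add_comm, mul_comm n a]; exact hψ.nat_mul a (m * b)
  have split_exp : exp (2 * Real.pi * I * (n * a + m * b : ℕ) * k / (m * n : ℕ)) =
      exp (2 * Real.pi * I * a * k / m) * exp (2 * Real.pi * I * b * k / n) := by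
    rw [← exp_add]
    congr 1
    push_cast
    field_simp
  simp only [Pi.mul_apply, eval_χ, eval_ψ, split_exp]
  ring

theorem natGaussSum_odd_four (k : ℕ) :
    natGaussSum (fun j => if Odd j then 1 else 0) 4 k = I ^ k + (-I) ^ k := by
  have exp_eq (j : ℕ) : exp (2 * Real.pi * I * j * k / (4 : ℕ)) = (I ^ j) ^ k := by
    conv_rhs => rw [← exp_pi_div_two_mul_I, ← exp_nat_mul, ← exp_nat_mul]
    push_cast
    ring_nf
  have not_odd_two : ¬Odd 2 := by decide
  have odd_three : Odd 3 := by decide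
  simp only [natGaussSum, exp_eq]
  simp [sum_range_succ, not_odd_two, odd_three, I_pow_three]

end GaussSums

section JacobiGaussSums

theorem norm_jacobiSym_le_one (a : ℤ) (n : ℕ) : ‖((jacobiSym a n : ℤ) : ℂ)‖ ≤ 1 := by
  rcases jacobiSym.trichotomy a n with h | h | h <;> simp [h]

theorem periodic_jacobiSym (n : ℕ) :
    Periodic (fun j : ℕ => ((jacobiSym j n : ℤ) : ℂ)) n := fun j =>
  congrArg _ (jacobiSym.mod_left' (by simp))

theorem jacobiTau_eq_natGaussSum (n k : ℕ) :
    jacobiTau n k = natGaussSum (fun j => ((jacobiSym j n : ℤ) : ℂ)) n k := rfl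

theorem tau4n_eq_natGaussSum (n k : ℕ) :
    tau4n n k =
      natGaussSum (fun j => (if Odd j then 1 else 0) * ((jacobiSym j n : ℤ) : ℂ)) (4 * n) k := by
  simp [tau4n, natGaussSum]

theorem norm_jacobiTau_le (n k : ℕ) : ‖jacobiTau n k‖ ≤ n :=
  norm_natGaussSum_le (fun j => norm_jacobiSym_le_one j n) n k

theorem norm_tau4n_le (n k : ℕ) : ‖tau4n n k‖ ≤ 4 * n := by
  rw [tau4n_eq_natGaussSum]
  refine (norm_natGaussSum_le (fun j => ?_) (4 * n) k).trans_eq (by push_cast; rfl)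
  split_ifs
  · simpa using norm_jacobiSym_le_one j n
  · simp

theorem jacobiTau_mul {n u : ℕ} (hu : n.Coprime u) (k : ℕ) :
    jacobiTau n (u * k) = ((jacobiSym u n : ℤ) : ℂ) * jacobiTau n k := by
  have sq : ((jacobiSym u n : ℤ) : ℂ) * ((jacobiSym u n : ℤ) : ℂ) = 1 := by
    rw [← Int.cast_mul, ← pow_two, jacobiSym.sq_one (by simpa using hu.symm), Int.cast_one]
  have reindex : ((jacobiSym u n : ℤ) : ℂ) * jacobiTau n (u * k) = jacobiTau n k := by
    rw [jacobiTau_eq_natGaussSum n k, ← natGaussSum_comp_mul_left (periodic_jacobiSym n) hu]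
    simp only [jacobiTau, natGaussSum, mul_sum, Nat.cast_mul, jacobiSym.mul_left, Int.cast_mul,
      mul_assoc]
  rw [← reindex, ← mul_assoc, sq, one_mul]

variable {n k : ℕ}

theorem coprime_four_of_odd (hn : Odd n) : Nat.Coprime 4 n :=
  (Nat.coprime_two_left.2 hn).pow_left 2

theorem odd_of_mod_four_eq {r : ℕ} (hr : Odd r) (hn : n % 4 = r) : Odd n := by
  rw [Nat.odd_iff] at hr ⊢
  omega

theorem tau4n_eq_mul_jacobiTau (hn : Odd n) (k : ℕ) :
    tau4n n k = (I ^ k + (-I) ^ k) * jacobiTau n k := by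
  have periodic_odd : Periodic (fun j : ℕ => if Odd j then (1 : ℂ) else 0) 4 := fun j => by
    simp [Nat.odd_add, show Even 4 by decide]
  have odd_mul (j : ℕ) : Odd (n * j) ↔ Odd j := by simp [Nat.odd_mul, hn]
  have jacobi_mul (j : ℕ) : jacobiSym (4 * j : ℕ) n = jacobiSym j n := by
    rw [Nat.cast_mul, jacobiSym.mul_left, Nat.cast_ofNat, jacobiSym.at_four hn, one_mul]
  rw [tau4n_eq_natGaussSum, natGaussSum_mul_of_coprime periodic_odd (periodic_jacobiSym n)
    (coprime_four_of_odd hn) four_ne_zero hn.pos.ne']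
  simp only [odd_mul, jacobi_mul, natGaussSum_odd_four, jacobiTau_eq_natGaussSum]

theorem tau4n_of_odd (hn : Odd n) (hk : Odd k) : tau4n n k = 0 := by
  rw [tau4n_eq_mul_jacobiTau hn, hk.neg_pow, add_neg_cancel, zero_mul]

theorem psi2_eq_jacobiSym_two (hn : Odd n) : psi2 n = ((jacobiSym 2 n : ℤ) : ℂ) := by
  rw [psi2, jacobiSym.at_two hn]

theorem tau4n_two_mul (hn : Odd n) (hk : Odd k) :
    tau4n n (2 * k) = -2 * psi2 n * jacobiTau n k := by
  rw [tau4n_eq_mul_jacobiTau hn, jacobiTau_mul (Nat.coprime_two_right.2 hn), pow_mul, pow_mul,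
    neg_sq, I_sq, hk.neg_one_pow, psi2_eq_jacobiSym_two hn]
  push_cast
  ring

theorem tau4n_four_mul (hn : Odd n) (k : ℕ) : tau4n n (4 * k) = 2 * jacobiTau n k := by
  rw [tau4n_eq_mul_jacobiTau hn, jacobiTau_mul (coprime_four_of_odd hn).symm, pow_mul, pow_mul,
    Even.neg_pow (by decide), I_pow_four, one_pow, Nat.cast_ofNat, jacobiSym.at_four hn]
  push_cast
  ring

end JacobiGaussSums

section QuadraticCharacters

theorem norm_isQuadratic_le_one {R : Type*} [CommMonoid R] {χ : MulChar R ℤ} (hχ : χ.IsQuadratic)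
    (a : R) : ‖((χ a : ℤ) : ℂ)‖ ≤ 1 := by
  rcases hχ a with h | h | h <;> simp [h]

theorem norm_psi0_le_one (n : ℕ) : ‖psi0 n‖ ≤ 1 := by simp [psi0]

theorem norm_psi1_le_one (n : ℕ) : ‖psi1 n‖ ≤ 1 := by
  unfold psi1; split_ifs <;> simp

theorem norm_psim1_le_one (n : ℕ) : ‖psim1 n‖ ≤ 1 := norm_isQuadratic_le_one ZMod.isQuadratic_χ₄ _

theorem norm_psi2_le_one (n : ℕ) : ‖psi2 n‖ ≤ 1 := norm_isQuadratic_le_one ZMod.isQuadratic_χ₈ _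

theorem norm_psim2_le_one (n : ℕ) : ‖psim2 n‖ ≤ 1 := norm_isQuadratic_le_one ZMod.isQuadratic_χ₈' _

theorem psim2_eq_psim1_mul_psi2 (n : ℕ) : psim2 n = psim1 n * psi2 n := by
  simpa [psim2, psim1, psi2] using
    congrArg (Int.cast : ℤ → ℂ) (ZMod.χ₈'_int_eq_χ₄_mul_χ₈ n)

variable {n r : ℕ}

theorem psi2_mul_self (hn : Odd n) : psi2 n * psi2 n = 1 := by
  rw [psi2_eq_jacobiSym_two hn, ← Int.cast_mul, ← pow_two,
    jacobiSym.sq_one (by simpa [Int.gcd] using hn), Int.cast_one]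

theorem psim1_of_mod_four_eq_one (hn : n % 4 = 1) : psim1 n = 1 := by
  simp [psim1, ZMod.χ₄_nat_one_mod_four hn]

theorem psim1_of_mod_four_eq_three (hn : n % 4 = 3) : psim1 n = -1 := by
  simp [psim1, ZMod.χ₄_nat_three_mod_four hn]

theorem one_add_psim1_mul_psim1 (hr : Odd r) (hn : Odd n) :
    1 + psim1 r * psim1 n = if n % 4 = r % 4 then 2 else 0 := by
  rcases Nat.odd_mod_four_iff.1 (Nat.odd_iff.1 hr) with h | h <;>
  rcases Nat.odd_mod_four_iff.1 (Nat.odd_iff.1 hn) with h' | h' <;>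
  norm_num [h, h', psim1_of_mod_four_eq_one, psim1_of_mod_four_eq_three]

/-- The classical sign `ε_n` of quadratic Gauss sums, equal to `1` for `n ≡ 1` and to `i` for
`n ≡ 3` modulo `4`; only its values at odd `n` are meaningful. -/
def gaussEpsilon (n : ℕ) : ℂ := if n % 4 = 1 then 1 else I

theorem norm_gaussEpsilon (n : ℕ) : ‖gaussEpsilon n‖ = 1 := by
  unfold gaussEpsilon; split_ifs <;> simp

theorem jacobiTau_eq_gaussEpsilon_mul_jacobiG (hn : Odd n) (k : ℕ) :
    jacobiTau n k = gaussEpsilon n * jacobiG n k := by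
  have at_neg_one : ((jacobiSym (-1) n : ℤ) : ℂ) = psim1 n := by rw [jacobiSym.at_neg_one hn, psim1]
  rw [jacobiG, at_neg_one]
  rcases Nat.odd_mod_four_iff.1 (Nat.odd_iff.1 hn) with h | h
  · rw [psim1_of_mod_four_eq_one h, gaussEpsilon, if_pos h]
    ring
  · rw [psim1_of_mod_four_eq_three h, gaussEpsilon, if_neg (by omega)]
    linear_combination jacobiTau n k * I_sq

theorem norm_jacobiG_le (hn : Odd n) (k : ℕ) : ‖jacobiG n k‖ ≤ n := by
  simpa [jacobiTau_eq_gaussEpsilon_mul_jacobiG hn, norm_gaussEpsilon] using norm_jacobiTau_le n k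

end QuadraticCharacters

section EulerFactors

theorem exists_pow_card_primeFactors_le {c e : ℝ} (hc : 1 ≤ c) (he : 0 < e) :
    ∃ C : ℝ, ∀ n : ℕ, n ≠ 0 → c ^ #n.primeFactors ≤ C * (n : ℝ) ^ e := by
  obtain ⟨P, hP⟩ : ∃ P : ℕ, ∀ p : ℕ, P ≤ p → c ≤ (p : ℝ) ^ e :=
    Filter.eventually_atTop.1
      (((tendsto_rpow_atTop he).comp tendsto_natCast_atTop_atTop).eventually_ge_atTop c)
  refine ⟨c ^ P, fun n hn => ?_⟩
  have le_factor : ∀ p ∈ n.primeFactors, c ≤ (if p < P then c else 1) * (p : ℝ) ^ e := by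
    intro p hp
    have one_le : (1 : ℝ) ≤ (p : ℝ) ^ e :=
      Real.one_le_rpow (by exact_mod_cast (Nat.prime_of_mem_primeFactors hp).one_le) he.le
    split_ifs with h
    · exact le_mul_of_one_le_right (by linarith) one_le
    · simpa using hP p (not_lt.1 h)
  have small_primes : ∏ p ∈ n.primeFactors, (if p < P then c else 1) ≤ c ^ P := by
    rw [← prod_filter, prod_const]
    refine pow_le_pow_right₀ hc ((card_le_card fun p hp => ?_).trans_eq (card_range P))
    exact mem_range.2 (mem_filter.1 hp).2
  have radical_le : ∏ p ∈ n.primeFactors, (p : ℝ) ^ e ≤ (n : ℝ) ^ e := by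
    rw [Real.finsetProd_rpow _ _ fun _ _ => Nat.cast_nonneg _, ← Nat.cast_prod]
    gcongr
    exact Nat.le_of_dvd (Nat.pos_of_ne_zero hn) (Nat.prod_primeFactors_dvd n)
  calc c ^ #n.primeFactors = ∏ _p ∈ n.primeFactors, c := (prod_const c).symm
    _ ≤ ∏ p ∈ n.primeFactors, (if p < P then c else 1) * (p : ℝ) ^ e :=
        prod_le_prod (fun _ _ => by positivity) le_factor
    _ = (∏ p ∈ n.primeFactors, if p < P then c else 1) * ∏ p ∈ n.primeFactors, (p : ℝ) ^ e :=
        prod_mul_distrib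
    _ ≤ c ^ P * (n : ℝ) ^ e := by gcongr

variable {t : ℂ}

theorem norm_inv_one_sub_natCast_cpow_neg_le (ht : 0 < t.re) {p : ℕ} (hp : 2 ≤ p) :
    ‖(1 - (p : ℂ) ^ (-t))⁻¹‖ ≤ (1 - (2 : ℝ) ^ (-t.re))⁻¹ := by
  have two_rpow_lt : (2 : ℝ) ^ (-t.re) < 1 :=
    Real.rpow_lt_one_of_one_lt_of_neg one_lt_two (neg_neg_of_pos ht)
  have norm_le : ‖(p : ℂ) ^ (-t)‖ ≤ (2 : ℝ) ^ (-t.re) := by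
    rw [norm_natCast_cpow_of_pos (by omega), neg_re]
    exact Real.rpow_le_rpow_of_nonpos two_pos (by exact_mod_cast hp) (by linarith)
  have reverse_triangle := norm_sub_norm_le (1 : ℂ) ((p : ℂ) ^ (-t))
  rw [norm_one] at reverse_triangle
  rw [norm_inv]
  exact inv_anti₀ (by linarith) (by linarith)

theorem exists_norm_aF_le (ht : 0 < t.re) {e : ℝ} (he : 0 < e) :
    ∃ C : ℝ, ∀ n : ℕ, n ≠ 0 → ‖aF t n‖ ≤ C * (n : ℝ) ^ e := by
  set c : ℝ := (1 - (2 : ℝ) ^ (-t.re))⁻¹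
  have one_le_c : 1 ≤ c :=
    (one_le_inv₀ (sub_pos.2 (Real.rpow_lt_one_of_one_lt_of_neg one_lt_two (neg_neg_of_pos ht)))).2
      (sub_le_self 1 (by positivity))
  obtain ⟨C, hC⟩ := exists_pow_card_primeFactors_le one_le_c he
  refine ⟨C, fun n hn => le_trans ?_ (hC n hn)⟩
  rw [aF, norm_prod, ← prod_const]
  exact prod_le_prod (fun _ _ => norm_nonneg _) fun p hp =>
    norm_inv_one_sub_natCast_cpow_neg_le ht (Nat.prime_of_mem_primeFactors hp).two_le

theorem aF_mul_of_coprime (t : ℂ) {m n : ℕ} (h : m.Coprime n) :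
    aF t (m * n) = aF t m * aF t n := by
  rw [aF, h.primeFactors_mul, prod_union h.disjoint_primeFactors, aF, aF]

theorem aF_pow (t : ℂ) (m : ℕ) {a : ℕ} (ha : a ≠ 0) : aF t (m ^ a) = aF t m := by
  rw [aF, Nat.primeFactors_pow m ha, aF]

theorem aF_four_mul (t : ℂ) {n : ℕ} (hn : Odd n) : aF t (4 * n) = aF t 2 * aF t n := by
  rw [aF_mul_of_coprime t (coprime_four_of_odd hn), show 4 = 2 ^ 2 from rfl, aF_pow t 2 two_ne_zero]

end EulerFactors

section DoubleDirichletSeries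

/-- The term `c(n,k) / (n^z k^w)` of a double Dirichlet series at `q = (n, k)`. The series is meant
to run over positive `n` and `k`: for `z, w ≠ 0` the terms with `n = 0` or `k = 0` vanish because
they are divided by zero. -/
def doubleDirichletTerm (c : ℕ → ℕ → ℂ) (z w : ℂ) (q : ℕ × ℕ) : ℂ :=
  c q.1 q.2 / ((q.1 : ℂ) ^ z * (q.2 : ℂ) ^ w)

/-- The double Dirichlet series `∑ c(n,k) / (n^z k^w)`. -/
def doubleDirichletSeries (c : ℕ → ℕ → ℂ) (z w : ℂ) : ℂ :=
  ∑' q : ℕ × ℕ, doubleDirichletTerm c z w q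

variable {c d : ℕ → ℕ → ℂ} {z w : ℂ}

theorem doubleDirichletTerm_ite (c : ℕ → ℕ → ℂ) (P : ℕ → Prop) [DecidablePred P] (z : ℂ)
    (hw : w ≠ 0) :
    doubleDirichletTerm (fun n k => if P n then c n k else 0) z w = fun q : ℕ × ℕ =>
      if P q.1 ∧ 1 ≤ q.2 then c q.1 q.2 / ((q.1 : ℂ) ^ z * (q.2 : ℂ) ^ w) else 0 := by
  ext ⟨n, k⟩
  rcases Nat.eq_zero_or_pos k with rfl | hk
  · simp [doubleDirichletTerm, hw]
  · simp [doubleDirichletTerm, Nat.one_le_iff_ne_zero, hk.ne', ite_div]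

theorem summable_norm_doubleDirichletTerm {D x : ℝ} (hx : 0 ≤ x)
    (hc : ∀ n k, ‖c n k‖ ≤ D * (n : ℝ) ^ x) (hz : x + 1 < z.re) (hw : 1 < w.re) :
    Summable fun q => ‖doubleDirichletTerm c z w q‖ := by
  have majorant : Summable fun q : ℕ × ℕ =>
      D * ((q.1 : ℝ) ^ (x - z.re) * (q.2 : ℝ) ^ (-w.re)) :=
    ((Real.summable_nat_rpow.2 (by linarith)).mul_of_nonneg
      (Real.summable_nat_rpow.2 (by linarith)) (fun _ => by positivity)
      (fun _ => by positivity)).mul_left D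
  refine majorant.of_nonneg_of_le (fun _ => norm_nonneg _) fun ⟨n, k⟩ => ?_
  rw [doubleDirichletTerm, norm_div, norm_mul,
    norm_natCast_cpow_of_re_ne_zero n (by linarith : z.re ≠ 0),
    norm_natCast_cpow_of_re_ne_zero k (by linarith : w.re ≠ 0)]
  calc ‖c n k‖ / ((n : ℝ) ^ z.re * (k : ℝ) ^ w.re)
      ≤ D * (n : ℝ) ^ x / ((n : ℝ) ^ z.re * (k : ℝ) ^ w.re) := by gcongr; exact hc n k
    _ = D * ((n : ℝ) ^ (x - z.re) * (k : ℝ) ^ (-w.re)) := by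
        rw [Real.rpow_sub' (Nat.cast_nonneg n) (by linarith), Real.rpow_neg (Nat.cast_nonneg k)]
        ring

theorem doubleDirichletSeries_mul_add_mul (hc : Summable (doubleDirichletTerm c z w))
    (hd : Summable (doubleDirichletTerm d z w)) (a b : ℂ) :
    doubleDirichletSeries (fun n k => a * (c n k + b * d n k)) z w =
      a * (doubleDirichletSeries c z w + b * doubleDirichletSeries d z w) := by
  simp only [doubleDirichletSeries]
  rw [← tsum_mul_left (a := b), ← hc.tsum_add (hd.mul_left b), ← tsum_mul_left]
  refine tsum_congr fun q => ?_
  simp only [doubleDirichletTerm]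
  ring

theorem doubleDirichletTerm_natCast_mul (c : ℕ → ℕ → ℂ) (z w : ℂ) (m n k : ℕ) :
    doubleDirichletTerm c z w (n, m * k) =
      ((m : ℂ) ^ w)⁻¹ * doubleDirichletTerm (fun n k => c n (m * k)) z w (n, k) := by
  simp only [doubleDirichletTerm, Nat.cast_mul, natCast_mul_natCast_cpow]
  ring

theorem injective_prodMk_two_mul : Injective fun q : ℕ × ℕ => (q.1, 2 * q.2) :=
  injective_id.prodMap (mul_right_injective₀ two_ne_zero)

theorem summable_doubleDirichletTerm_two_mul (hc : Summable (doubleDirichletTerm c z w)) :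
    Summable (doubleDirichletTerm (fun n k => c n (2 * k)) z w) := by
  have two_cpow_inv_ne_zero : (((2 : ℕ) : ℂ) ^ w)⁻¹ ≠ 0 := by simp
  rw [← summable_mul_left_iff two_cpow_inv_ne_zero]
  exact (hc.comp_injective injective_prodMk_two_mul).congr fun q =>
    doubleDirichletTerm_natCast_mul c z w 2 q.1 q.2

theorem doubleDirichletSeries_of_odd_eq_zero (hc : ∀ n k, Odd k → c n k = 0) :
    doubleDirichletSeries c z w =
      ((2 : ℂ) ^ w)⁻¹ * doubleDirichletSeries (fun n k => c n (2 * k)) z w := by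
  have support_subset : support (doubleDirichletTerm c z w) ⊆
      Set.range fun q : ℕ × ℕ => (q.1, 2 * q.2) := by
    rintro ⟨n, k⟩ hnk
    rcases Nat.even_or_odd' k with ⟨m, rfl | rfl⟩
    · exact ⟨(n, m), rfl⟩
    · exact absurd (by simp [doubleDirichletTerm, hc n _ (odd_two_mul_add_one m)]) hnk
  rw [doubleDirichletSeries, ← injective_prodMk_two_mul.tsum_eq support_subset,
    doubleDirichletSeries, ← tsum_mul_left]
  exact tsum_congr fun q => doubleDirichletTerm_natCast_mul c z w 2 q.1 q.2

theorem doubleDirichletSeries_eq_odd_add_even (hc : Summable (doubleDirichletTerm c z w)) :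
    doubleDirichletSeries c z w =
      doubleDirichletSeries (fun n k => if Odd k then c n k else 0) z w +
        ((2 : ℂ) ^ w)⁻¹ * doubleDirichletSeries (fun n k => c n (2 * k)) z w := by
  have odd_part : doubleDirichletTerm (fun n k => if Odd k then c n k else 0) z w =
      {q : ℕ × ℕ | Odd q.2}.indicator (doubleDirichletTerm c z w) := by
    ext q; simp [doubleDirichletTerm, Set.indicator_apply, ite_div]
  have even_part : doubleDirichletTerm (fun n k => if Odd k then 0 else c n k) z w =
      {q : ℕ × ℕ | Odd q.2}ᶜ.indicator (doubleDirichletTerm c z w) := by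
    ext q; simp [doubleDirichletTerm, Set.indicator_apply, ite_div, -Nat.not_odd_iff_even]
  have even_series : doubleDirichletSeries (fun n k => if Odd k then 0 else c n k) z w =
      ((2 : ℂ) ^ w)⁻¹ * doubleDirichletSeries (fun n k => c n (2 * k)) z w := by
    rw [doubleDirichletSeries_of_odd_eq_zero fun n k hk => if_pos hk]
    simp [← Nat.not_even_iff_odd]
  rw [← even_series, doubleDirichletSeries, doubleDirichletSeries, doubleDirichletSeries, odd_part,
    even_part, ← (hc.indicator _).tsum_add (hc.indicator _)]
  exact tsum_congr fun q => (Set.indicator_self_add_compl_apply _ _ q).symm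

end DoubleDirichletSeries

section Decomposition

/-- The coefficients of the double Dirichlet series `2 B_±(s,w;t)`, with `n ≡ r` modulo `4`. -/
def bpmCoeff (r : ℕ) (t : ℂ) (n k : ℕ) : ℂ :=
  if n % 4 = r then tau4n n k * aF t (4 * n) * psi2 n else 0

/-- The coefficients of the double Dirichlet series `B(s,w;t,ψ,ψ')`. -/
def bgenCoeff (t : ℂ) (ψ ψ' : ℕ → ℂ) (n k : ℕ) : ℂ :=
  if Odd n then jacobiG n k * aF t n * ψ n * ψ' k else 0

variable {s w t : ℂ} {r : ℕ} {ψ ψ' : ℕ → ℂ}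

theorem doubleDirichletTerm_bpmCoeff (r : ℕ) (s t : ℂ) (hw : w ≠ 0) :
    doubleDirichletTerm (bpmCoeff r t) (s + 1 / 2) w = fun q : ℕ × ℕ =>
      if q.1 % 4 = r ∧ 1 ≤ q.2 then
        tau4n q.1 q.2 * aF t (4 * q.1) * psi2 q.1 / ((q.1 : ℂ) ^ (s + 1 / 2) * (q.2 : ℂ) ^ w)
      else 0 :=
  doubleDirichletTerm_ite (fun n k => tau4n n k * aF t (4 * n) * psi2 n) (· % 4 = r) _ hw

theorem doubleDirichletTerm_bgenCoeff (s t : ℂ) (hw : w ≠ 0) (ψ ψ' : ℕ → ℂ) :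
    doubleDirichletTerm (bgenCoeff t ψ ψ') (s + 1 / 2) w = fun q : ℕ × ℕ =>
      if Odd q.1 ∧ 1 ≤ q.2 then
        jacobiG q.1 q.2 * aF t q.1 * ψ q.1 * ψ' q.2 / ((q.1 : ℂ) ^ (s + 1 / 2) * (q.2 : ℂ) ^ w)
      else 0 :=
  doubleDirichletTerm_ite (fun n k => jacobiG n k * aF t n * ψ n * ψ' k) Odd _ hw

theorem Bpm_eq_doubleDirichletSeries (r : ℕ) (s t : ℂ) (hw : w ≠ 0) :
    Bpm r s w t = 1 / 2 * doubleDirichletSeries (bpmCoeff r t) (s + 1 / 2) w := by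
  rw [Bpm, doubleDirichletSeries, doubleDirichletTerm_bpmCoeff r s t hw]

theorem Bgen_eq_doubleDirichletSeries (s t : ℂ) (hw : w ≠ 0) (ψ ψ' : ℕ → ℂ) :
    Bgen s w t ψ ψ' = doubleDirichletSeries (bgenCoeff t ψ ψ') (s + 1 / 2) w := by
  rw [Bgen, doubleDirichletSeries, doubleDirichletTerm_bgenCoeff s t hw]

theorem summable_norm_doubleDirichletTerm_of_le_aF (hs : 3 / 2 < s.re) (hw : 1 < w.re)
    (ht : 0 < t.re) {c : ℕ → ℕ → ℂ} {D : ℝ} (hD : 0 ≤ D)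
    (hc : ∀ n k, ‖c n k‖ ≤ D * (n * ‖aF t n‖)) :
    Summable fun q => ‖doubleDirichletTerm c (s + 1 / 2) w q‖ := by
  obtain ⟨e, he, hes⟩ := exists_between (sub_pos.2 hs)
  obtain ⟨C, hC⟩ := exists_norm_aF_le ht he
  have re_eq : (s + 1 / 2).re = s.re + 1 / 2 := by simp
  refine summable_norm_doubleDirichletTerm (D := D * C) (x := 1 + e) (by linarith)
    (fun n k => (hc n k).trans ?_) (by linarith) hw
  rcases Nat.eq_zero_or_pos n with rfl | hn
  · simp [(by linarith : 1 + e ≠ 0)]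
  · rw [Real.rpow_add (by exact_mod_cast hn), Real.rpow_one]
    calc D * (n * ‖aF t n‖) ≤ D * (n * (C * (n : ℝ) ^ e)) := by gcongr; exact hC n hn.ne'
      _ = D * C * (n * (n : ℝ) ^ e) := by ring

theorem summable_norm_bpmCoeff (hs : 3 / 2 < s.re) (hw : 1 < w.re) (ht : 0 < t.re)
    (hr : Odd r) : Summable fun q => ‖doubleDirichletTerm (bpmCoeff r t) (s + 1 / 2) w q‖ := by
  refine summable_norm_doubleDirichletTerm_of_le_aF hs hw ht (D := 4 * ‖aF t 2‖) (by positivity)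
    fun n k => ?_
  unfold bpmCoeff
  split_ifs with hn
  · rw [aF_four_mul t (odd_of_mod_four_eq hr hn), norm_mul, norm_mul, norm_mul]
    calc ‖tau4n n k‖ * (‖aF t 2‖ * ‖aF t n‖) * ‖psi2 n‖
        ≤ 4 * n * (‖aF t 2‖ * ‖aF t n‖) * 1 := by
          gcongr
          exacts [norm_tau4n_le n k, norm_psi2_le_one n]
      _ = 4 * ‖aF t 2‖ * (n * ‖aF t n‖) := by ring
  · rw [norm_zero]; positivity

theorem summable_norm_bgenCoeff (hs : 3 / 2 < s.re) (hw : 1 < w.re) (ht : 0 < t.re)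
    (hψ : ∀ n, ‖ψ n‖ ≤ 1) (hψ' : ∀ k, ‖ψ' k‖ ≤ 1) :
    Summable fun q => ‖doubleDirichletTerm (bgenCoeff t ψ ψ') (s + 1 / 2) w q‖ := by
  refine summable_norm_doubleDirichletTerm_of_le_aF hs hw ht zero_le_one fun n k => ?_
  unfold bgenCoeff
  split_ifs with hn
  · rw [norm_mul, norm_mul, norm_mul]
    calc ‖jacobiG n k‖ * ‖aF t n‖ * ‖ψ n‖ * ‖ψ' k‖ ≤ n * ‖aF t n‖ * 1 * 1 := by
          gcongr
          exacts [norm_jacobiG_le hn k, hψ n, hψ' k]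
      _ = 1 * (n * ‖aF t n‖) := by ring
  · rw [norm_zero]; positivity

theorem gaussEpsilon_mul_jacobiG_mul_one_add_psim1 (hr : r = 1 ∨ r = 3) {n : ℕ} (hn : Odd n)
    (k : ℕ) :
    gaussEpsilon r * jacobiG n k * (1 + psim1 r * psim1 n) =
      if n % 4 = r then 2 * jacobiTau n k else 0 := by
  have hr' : Odd r ∧ r % 4 = r := by rcases hr with rfl | rfl <;> decide
  rw [one_add_psim1_mul_psim1 hr'.1 hn, hr'.2]
  split_ifs with h
  · have eps_eq : gaussEpsilon n = gaussEpsilon r := by simp [gaussEpsilon, h, hr'.2]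
    rw [jacobiTau_eq_gaussEpsilon_mul_jacobiG hn, eps_eq]
    ring
  · ring

theorem bpmCoeff_of_odd (hr : Odd r) (n : ℕ) {k : ℕ} (hk : Odd k) : bpmCoeff r t n k = 0 := by
  unfold bpmCoeff
  split_ifs with hn
  · rw [tau4n_of_odd (odd_of_mod_four_eq hr hn) hk]
    ring
  · rfl

theorem bpmCoeff_four_mul (hr : r = 1 ∨ r = 3) (t : ℂ) (n k : ℕ) :
    bpmCoeff r t n (4 * k) = gaussEpsilon r * aF t 2 *
      (bgenCoeff t psi2 psi0 n k + psim1 r * bgenCoeff t psim2 psi0 n k) := by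
  unfold bpmCoeff bgenCoeff
  by_cases hn : Odd n
  · have select := gaussEpsilon_mul_jacobiG_mul_one_add_psim1 hr hn k
    simp only [hn, if_true, psi0, psim2_eq_psim1_mul_psi2, tau4n_four_mul hn, aF_four_mul t hn]
    split_ifs at select ⊢ <;> linear_combination (-aF t 2 * aF t n * psi2 n) * select
  · rw [Nat.odd_iff] at hn
    have hnr : n % 4 ≠ r := by omega
    simp [Nat.odd_iff, hn, hnr]

theorem bpmCoeff_two_mul (hr : r = 1 ∨ r = 3) (t : ℂ) (n k : ℕ) :
    (if Odd k then bpmCoeff r t n (2 * k) else 0) = -(gaussEpsilon r * aF t 2) *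
      (bgenCoeff t psi1 psi1 n k + psim1 r * bgenCoeff t psim1 psi1 n k) := by
  unfold bpmCoeff bgenCoeff
  by_cases hk : Odd k
  swap
  · simp [psi1, hk]
  by_cases hn : Odd n
  · have select := gaussEpsilon_mul_jacobiG_mul_one_add_psim1 hr hn k
    simp only [hn, hk, if_true, psi1, tau4n_two_mul hn hk, aF_four_mul t hn]
    split_ifs at select ⊢
    · linear_combination (aF t 2 * aF t n) * select -
        2 * jacobiTau n k * aF t 2 * aF t n * psi2_mul_self hn
    · linear_combination (aF t 2 * aF t n) * select
  · rw [Nat.odd_iff] at hn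
    have hnr : n % 4 ≠ r := by omega
    simp [Nat.odd_iff, hn, hnr]

theorem doubleDirichletSeries_bpmCoeff {z : ℂ} (hr : Odd r)
    (hsum : Summable (doubleDirichletTerm (bpmCoeff r t) z w)) :
    doubleDirichletSeries (bpmCoeff r t) z w =
      ((2 : ℂ) ^ w)⁻¹ *
          doubleDirichletSeries (fun n k => if Odd k then bpmCoeff r t n (2 * k) else 0) z w +
        ((4 : ℂ) ^ w)⁻¹ * doubleDirichletSeries (fun n k => bpmCoeff r t n (4 * k)) z w := by
  have four_cpow : (4 : ℂ) ^ w = 2 ^ w * 2 ^ w := by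
    rw [← Nat.cast_ofNat (R := ℂ) (n := 2), ← natCast_mul_natCast_cpow]
    norm_num
  rw [doubleDirichletSeries_of_odd_eq_zero fun n k hk => bpmCoeff_of_odd hr n hk,
    doubleDirichletSeries_eq_odd_add_even (summable_doubleDirichletTerm_two_mul hsum), four_cpow]
  simp only [← mul_assoc, Nat.reduceMul]
  ring

theorem Bpm_eq (hs : 3 / 2 < s.re) (hw : 1 < w.re) (ht : 0 < t.re) (hr : r = 1 ∨ r = 3) :
    Bpm r s w t =
      gaussEpsilon r * aF t 2 / (2 * (4 : ℂ) ^ w) *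
          (Bgen s w t psi2 psi0 + psim1 r * Bgen s w t psim2 psi0) -
        gaussEpsilon r * aF t 2 / (2 * (2 : ℂ) ^ w) *
          (Bgen s w t psi1 psi1 + psim1 r * Bgen s w t psim1 psi1) := by
  have odd_r : Odd r := by rcases hr with rfl | rfl <;> decide
  have hw0 : w ≠ 0 := ne_zero_of_one_lt_re hw
  have summable_gen {ψ ψ' : ℕ → ℂ} (hψ : ∀ n, ‖ψ n‖ ≤ 1) (hψ' : ∀ k, ‖ψ' k‖ ≤ 1) :=
    (summable_norm_bgenCoeff hs hw ht hψ hψ').of_norm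
  rw [Bpm_eq_doubleDirichletSeries r s t hw0,
    doubleDirichletSeries_bpmCoeff odd_r (summable_norm_bpmCoeff hs hw ht odd_r).of_norm]
  simp only [bpmCoeff_two_mul hr, bpmCoeff_four_mul hr, Bgen_eq_doubleDirichletSeries s t hw0]
  rw [doubleDirichletSeries_mul_add_mul (summable_gen norm_psi1_le_one norm_psi1_le_one)
      (summable_gen norm_psim1_le_one norm_psi1_le_one),
    doubleDirichletSeries_mul_add_mul (summable_gen norm_psi2_le_one norm_psi0_le_one)
      (summable_gen norm_psim2_le_one norm_psi0_le_one)]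
  ring

end Decomposition

/-- decomposition of `B_±(s,w;t)` into the series `B(s,w;t,ψ,ψ')` with
multiplicative coefficients. -/
theorem statement15 (s w t : ℂ) (hs : 3 / 2 < s.re) (hw : 1 < w.re) (ht : 0 < t.re) :
    (∀ r : ℕ, r = 1 ∨ r = 3 →
      Summable (fun q : ℕ × ℕ => ‖(if q.1 % 4 = r ∧ 1 ≤ q.2 then
        tau4n q.1 q.2 * aF t (4 * q.1) * psi2 q.1 / ((q.1 : ℂ) ^ (s + 1 / 2) * (q.2 : ℂ) ^ w)
      else 0)‖)) ∧
    (∀ ψ ψ' : ℕ → ℂ,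
      ((ψ = psi2 ∨ ψ = psim2) ∧ ψ' = psi0) ∨ ((ψ = psi1 ∨ ψ = psim1) ∧ ψ' = psi1) →
      Summable (fun q : ℕ × ℕ => ‖(if Odd q.1 ∧ 1 ≤ q.2 then
        jacobiG q.1 q.2 * aF t q.1 * ψ q.1 * ψ' q.2 / ((q.1 : ℂ) ^ (s + 1 / 2) * (q.2 : ℂ) ^ w)
      else 0)‖)) ∧
    Bpm 1 s w t =
      (1 * aF t 2 / (2 * (4 : ℂ) ^ w)) * (Bgen s w t psi2 psi0 + Bgen s w t psim2 psi0) -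
      (1 * aF t 2 / (2 * (2 : ℂ) ^ w)) * (Bgen s w t psi1 psi1 + Bgen s w t psim1 psi1) ∧
    Bpm 3 s w t =
      (Complex.I * aF t 2 / (2 * (4 : ℂ) ^ w)) * (Bgen s w t psi2 psi0 - Bgen s w t psim2 psi0) -
      (Complex.I * aF t 2 / (2 * (2 : ℂ) ^ w)) * (Bgen s w t psi1 psi1 - Bgen s w t psim1 psi1) := by
  have hw0 : w ≠ 0 := ne_zero_of_one_lt_re hw
  have summable_gen {ψ ψ' : ℕ → ℂ} (hψ : ∀ n, ‖ψ n‖ ≤ 1) (hψ' : ∀ k, ‖ψ' k‖ ≤ 1) := by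
    simpa only [doubleDirichletTerm_bgenCoeff s t hw0] using
      summable_norm_bgenCoeff hs hw ht hψ hψ'
  refine ⟨fun r hr => ?_, ?_, ?_, ?_⟩
  · have odd_r : Odd r := by rcases hr with rfl | rfl <;> decide
    simpa only [doubleDirichletTerm_bpmCoeff r s t hw0] using summable_norm_bpmCoeff hs hw ht odd_r
  · rintro ψ ψ' (⟨rfl | rfl, rfl⟩ | ⟨rfl | rfl, rfl⟩)
    · exact summable_gen norm_psi2_le_one norm_psi0_le_one
    · exact summable_gen norm_psim2_le_one norm_psi0_le_one
    · exact summable_gen norm_psi1_le_one norm_psi1_le_one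
    · exact summable_gen norm_psim1_le_one norm_psi1_le_one
  · simpa [gaussEpsilon, psim1_of_mod_four_eq_one] using Bpm_eq hs hw ht (Or.inl rfl)
  · simpa [gaussEpsilon, psim1_of_mod_four_eq_three, ← sub_eq_add_neg] using
      Bpm_eq hs hw ht (Or.inr rfl)
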